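/- Let ũ, μ ∈ ℝ and 0 < ξ < σ, and set σ' = √(σ² − ξ²). Then ∫_ℝ Φ((ũ − m)/σ') · Φ((m − ũ)/σ') · (1/ξ) φ((m − μ)/ξ) dm = 2 T( (ũ − μ)/σ , √((σ² − ξ²)/(σ² + ξ²)) ); that is, the expectation of Φ(z)Φ(−z) with z = (ũ − m)/σ' and m normally distributed with mean μ and variance ξ² equals twice an Owen's T function value. -/

import Mathlib

open MeasureTheory

/-- The standard normal cumulative distribution function. -/
noncomputable def Phi (x : ℝ) : ℝ :=
  ∫ t in Set.Iic x, Real.exp (-t^2/2) / Real.sqrt (2 * Real.pi)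

/-- The standard normal density. -/
noncomputable def phiPdf (x : ℝ) : ℝ :=
  Real.exp (-x^2/2) / Real.sqrt (2 * Real.pi)

/-- Owen's T function. -/
noncomputable def owenT (h a : ℝ) : ℝ :=
  (1 / (2 * Real.pi)) * ∫ x in (0:ℝ)..a, Real.exp (-h^2 * (1 + x^2) / 2) / (1 + x^2)

lemma aux_integrable_pdf : Integrable phiPdf := by
  have h := (integrable_exp_neg_mul_sq (b := 1/2) (by norm_num)).div_const (Real.sqrt (2 * Real.pi))
  refine h.congr (Filter.Eventually.of_forall fun x => ?_)
  simp only [phiPdf]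
  congr 2
  ring

lemma aux_cont_pdf : Continuous phiPdf := by
  unfold phiPdf
  fun_prop

lemma aux_pdf_neg (x : ℝ) : phiPdf (-x) = phiPdf x := by
  simp [phiPdf]

lemma aux_Phi_zero : Phi 0 = 1 / 2 := by
  have h1 : Phi 0 = ∫ t in Set.Iic (0:ℝ), phiPdf (-t) := by
    simp only [aux_pdf_neg]; rfl
  rw [h1, integral_comp_neg_Iic, neg_zero]
  have h2 : ∀ t, phiPdf t = Real.exp (-(1/2) * t^2) / Real.sqrt (2 * Real.pi) := by
    intro t; simp only [phiPdf]; congr 2; ring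
  simp only [h2]
  rw [integral_div, integral_gaussian_Ioi]
  have : Real.pi / (1/2) = 2 * Real.pi := by ring
  rw [this]
  have hp : Real.sqrt (2 * Real.pi) ≠ 0 := by positivity
  field_simp

lemma aux_Phi (h : ℝ) : Phi h = 1 / 2 + ∫ t in (0:ℝ)..h, phiPdf t := by
  have := intervalIntegral.integral_Iic_sub_Iic (a := 0) (b := h) (f := phiPdf) (μ := volume)
    aux_integrable_pdf.integrableOn aux_integrable_pdf.integrableOn
  rw [← this]
  have h0 := aux_Phi_zero
  change _ = 1/2 + (Phi h - Phi 0)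
  linarith

lemma aux_Phi_neg (h : ℝ) : Phi (-h) = 1 / 2 - ∫ t in (0:ℝ)..h, phiPdf t := by
  rw [aux_Phi]
  have := intervalIntegral.integral_comp_neg (a := 0) (b := h) phiPdf
  simp only [aux_pdf_neg, neg_zero] at this
  rw [this, intervalIntegral.integral_symm (-h) 0]
  ring

lemma aux_owen_deriv (h : ℝ) : HasDerivAt (fun h => owenT h 1)
    (-(phiPdf h * ∫ t in (0:ℝ)..h, phiPdf t)) h := by
  have key := (intervalIntegral.hasDerivAt_integral_of_dominated_loc_of_deriv_le
    (μ := volume) (a := 0) (b := 1) (x₀ := h) (s := Metric.ball h 1)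
    (F := fun h x => Real.exp (-h^2 * (1 + x^2) / 2) / (1 + x^2))
    (F' := fun h x => -h * Real.exp (-h^2 * (1 + x^2) / 2))
    (bound := fun _ => |h| + 1) (Metric.ball_mem_nhds h one_pos)
    (Filter.Eventually.of_forall fun y => by
      apply Continuous.aestronglyMeasurable
      exact Continuous.div (by fun_prop) (by fun_prop) (fun x => by positivity))
    (by
      apply Continuous.intervalIntegrable
      exact Continuous.div (by fun_prop) (by fun_prop) (fun x => by positivity))
    (by
      apply Continuous.aestronglyMeasurable
      fun_prop)
    (Filter.Eventually.of_forall fun t _ y hy => by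
      rw [norm_mul, norm_neg, Real.norm_eq_abs, Real.norm_eq_abs, Real.abs_exp]
      have h1 : Real.exp (-y^2 * (1 + t^2) / 2) ≤ 1 := by
        rw [Real.exp_le_one_iff]
        have : 0 ≤ y^2 * (1 + t^2) := by positivity
        linarith
      have h2 : |y| ≤ |h| + 1 := by
        rw [Metric.mem_ball, Real.dist_eq] at hy
        have := abs_sub_abs_le_abs_sub y h
        linarith
      calc |y| * _ ≤ |y| * 1 := by gcongr
        _ ≤ _ := by linarith)
    intervalIntegrable_const
    (Filter.Eventually.of_forall fun t _ y hy => by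
      have h1 : HasDerivAt (fun y : ℝ => -y^2 * (1 + t^2) / 2) (-y * (1 + t^2)) y := by
        have := (((hasDerivAt_pow 2 y).neg).mul_const (1 + t^2)).div_const 2
        refine this.congr_deriv ?_
        norm_num
        ring
      refine (h1.exp.div_const (1 + t^2)).congr_deriv ?_
      have : (1 + t^2) ≠ 0 := by positivity
      field_simp)).2
  have key2 := key.const_mul (1 / (2 * Real.pi))
  refine key2.congr_deriv ?_
  have e1 : ∀ x : ℝ, -h * Real.exp (-h^2 * (1 + x^2) / 2)
      = -(Real.sqrt (2 * Real.pi) * Real.exp (-h^2/2)) * (h * phiPdf (h * x)) := by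
    intro x
    have hp : Real.sqrt (2 * Real.pi) ≠ 0 := by positivity
    have : -h^2 * (1 + x^2) / 2 = -h^2/2 + -(h*x)^2/2 := by ring
    rw [this, Real.exp_add, phiPdf]
    field_simp
  simp only [e1]
  rw [intervalIntegral.integral_const_mul, intervalIntegral.integral_const_mul,
    intervalIntegral.mul_integral_comp_mul_left]
  simp only [mul_zero, mul_one]
  have hp : Real.sqrt (2 * Real.pi) ≠ 0 := by positivity
  have hq : Real.sqrt (2 * Real.pi) ^ 2 = 2 * Real.pi := Real.sq_sqrt (by positivity)
  generalize (∫ t in (0:ℝ)..h, phiPdf t) = I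
  rw [← hq, phiPdf, Real.sqrt_sq (Real.sqrt_nonneg _)]
  field_simp

lemma aux_PhiPhi (h : ℝ) : Phi h * Phi (-h) = 2 * owenT h 1 := by
  have hd : ∀ y, HasDerivAt
      (fun y => 2 * owenT y 1 + (∫ t in (0:ℝ)..y, phiPdf t) ^ 2) 0 y := by
    intro y
    have hI : HasDerivAt (fun y => ∫ t in (0:ℝ)..y, phiPdf t) (phiPdf y) y :=
      aux_cont_pdf.integral_hasStrictDerivAt 0 y |>.hasDerivAt
    refine (((aux_owen_deriv y).const_mul 2).add (hI.pow 2)).congr_deriv ?_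
    norm_num
    ring
  have hc := is_const_of_deriv_eq_zero (fun y => (hd y).differentiableAt)
    (fun y => (hd y).deriv) h 0
  have h0 : owenT 0 1 = 1 / 8 := by
    simp only [owenT]
    norm_num
    have := Real.pi_ne_zero
    field_simp
    norm_num
  simp only [intervalIntegral.integral_same, h0] at hc
  rw [aux_Phi, aux_Phi_neg]
  linarith

lemma aux_gauss (p q u v : ℝ) (hp : 0 < p) (hq : 0 < q) :
    ∫ m : ℝ, Real.exp (-p * (u - m)^2 / 2) * Real.exp (-q * (m - v)^2 / 2)
      = Real.exp (-(p * q / (p + q)) * (u - v)^2 / 2) * Real.sqrt (2 * Real.pi / (p + q)) := by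
  have e : ∀ m : ℝ, Real.exp (-p * (u - m)^2 / 2) * Real.exp (-q * (m - v)^2 / 2)
      = Real.exp (-(p * q / (p + q)) * (u - v)^2 / 2) *
        Real.exp (-((p+q)/2) * (m - (p * u + q * v) / (p + q))^2) := by
    intro m
    rw [← Real.exp_add, ← Real.exp_add]
    congr 1
    have : p + q ≠ 0 := by positivity
    field_simp
    ring
  simp only [e]
  rw [integral_const_mul, integral_sub_right_eq_self
    (fun m => Real.exp (-((p+q)/2) * m^2)), integral_gaussian]
  congr 2
  field_simp

lemma aux_inner (u v ξ s x : ℝ) (hξ : 0 < ξ) (hs : 0 < s) :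
    ∫ m : ℝ, Real.exp (-((u - m)/s)^2 * (1 + x^2) / 2) * ((1/ξ) * phiPdf ((m - v)/ξ))
      = s / Real.sqrt (s^2 + ξ^2 + ξ^2 * x^2)
        * Real.exp (-(u - v)^2 * ((1 + x^2) / (s^2 + ξ^2 + ξ^2 * x^2)) / 2) := by
  have hg := aux_gauss ((1 + x^2)/s^2) (1/ξ^2) u v (by positivity) (by positivity)
  have e : ∀ m : ℝ, Real.exp (-((u - m)/s)^2 * (1 + x^2) / 2) * ((1/ξ) * phiPdf ((m - v)/ξ))
      = (1 / (ξ * Real.sqrt (2 * Real.pi))) * (Real.exp (-((1 + x^2)/s^2) * (u - m)^2 / 2)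
        * Real.exp (-(1/ξ^2) * (m - v)^2 / 2)) := by
    intro m
    have e1 : -((u - m)/s)^2 * (1 + x^2) / 2 = -((1 + x^2)/s^2) * (u - m)^2 / 2 := by
      field_simp
    have e2 : -((m - v)/ξ)^2 / 2 = -(1/ξ^2) * (m - v)^2 / 2 := by
      field_simp
    rw [phiPdf, e1, e2]
    have hp : Real.sqrt (2 * Real.pi) ≠ 0 := by positivity
    field_simp
  simp only [e]
  rw [integral_const_mul, hg]
  have hD : 0 < s^2 + ξ^2 + ξ^2 * x^2 := by positivity
  have e3 : (1 + x^2)/s^2 + 1/ξ^2 = (s^2 + ξ^2 + ξ^2 * x^2) / (s * ξ)^2 := by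
    field_simp
    ring
  have e4 : Real.sqrt (2 * Real.pi / ((s^2 + ξ^2 + ξ^2 * x^2) / (s * ξ)^2))
      = Real.sqrt (2 * Real.pi) * (s * ξ) / Real.sqrt (s^2 + ξ^2 + ξ^2 * x^2) := by
    rw [Real.sqrt_div (by positivity), Real.sqrt_div (by positivity),
      Real.sqrt_sq (by positivity)]
    field_simp
  have e5 : -((1 + x^2)/s^2 * (1/ξ^2) / ((s^2 + ξ^2 + ξ^2 * x^2) / (s * ξ)^2)) * (u - v)^2 / 2
      = -(u - v)^2 * ((1 + x^2) / (s^2 + ξ^2 + ξ^2 * x^2)) / 2 := by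
    field_simp
  rw [e3, e4, e5]
  have hp : Real.sqrt (2 * Real.pi) ≠ 0 := by positivity
  have hp : Real.sqrt (s^2 + ξ^2 + ξ^2 * x^2) ≠ 0 := by positivity
  field_simp

lemma aux_swap (u v ξ s : ℝ) (hξ : 0 < ξ) :
    ∫ m : ℝ, (∫ x in (0:ℝ)..1, Real.exp (-((u - m)/s)^2 * (1 + x^2) / 2) / (1 + x^2)
        * ((1/ξ) * phiPdf ((m - v)/ξ)))
      = ∫ x in (0:ℝ)..1, ∫ m : ℝ, Real.exp (-((u - m)/s)^2 * (1 + x^2) / 2) / (1 + x^2)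
        * ((1/ξ) * phiPdf ((m - v)/ξ)) := by
  symm
  apply intervalIntegral_integral_swap
  have hi : Integrable (fun m : ℝ => (1/ξ) * phiPdf ((m - v)/ξ)) :=
    ((aux_integrable_pdf.comp_div hξ.ne').comp_sub_right v).const_mul (1/ξ)
  have h1 : Integrable (fun _ : ℝ => (1:ℝ)) (volume.restrict (Set.uIoc (0:ℝ) 1)) :=
    (intervalIntegrable_const (a := (0:ℝ)) (b := 1) (c := (1:ℝ))).def'
  refine (h1.mul_prod hi).mono' ?_ (Filter.Eventually.of_forall ?_)
  · apply Continuous.aestronglyMeasurable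
    unfold Function.uncurry
    have := aux_cont_pdf
    refine Continuous.mul (Continuous.div (by fun_prop) (by fun_prop) (fun x => by positivity)) ?_
    fun_prop
  · rintro ⟨x, m⟩
    have hn : 0 ≤ (1/ξ) * phiPdf ((m - v)/ξ) := by
      unfold phiPdf; positivity
    simp only [Function.uncurry]
    rw [Real.norm_of_nonneg (mul_nonneg (by positivity) hn)]
    refine mul_le_mul_of_nonneg_right ?_ hn
    rw [div_le_one (by positivity)]
    have h1 : Real.exp (-((u - m)/s)^2 * (1 + x^2) / 2) ≤ 1 := by
      rw [Real.exp_le_one_iff]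
      have : 0 ≤ ((u - m)/s)^2 * (1 + x^2) := by positivity
      linarith
    nlinarith [sq_nonneg x]

lemma aux_subst (c ξ s σ : ℝ) (hξ : 0 < ξ) (hs : 0 < s) (hσ : 0 < σ) (h : s^2 + ξ^2 = σ^2) :
    ∫ x in (0:ℝ)..1, (s / Real.sqrt (σ^2 + ξ^2 * x^2)
        * Real.exp (-c^2 * ((1 + x^2) / (σ^2 + ξ^2 * x^2)) / 2)) / (1 + x^2)
      = ∫ t in (0:ℝ)..(s / Real.sqrt (σ^2 + ξ^2)),
          Real.exp (-(c/σ)^2 * (1 + t^2) / 2) / (1 + t^2) := by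
  have hD : ∀ x : ℝ, 0 < σ^2 + ξ^2 * x^2 := fun x => by positivity
  have hR : ∀ x : ℝ, 0 < Real.sqrt (σ^2 + ξ^2 * x^2) := fun x => Real.sqrt_pos.2 (hD x)
  have hRR : ∀ x : ℝ, Real.sqrt (σ^2 + ξ^2 * x^2) ^ 2 = σ^2 + ξ^2 * x^2 :=
    fun x => Real.sq_sqrt (hD x).le
  have hsub := intervalIntegral.integral_comp_mul_deriv (a := 0) (b := 1)
    (f := fun x => s * x / Real.sqrt (σ^2 + ξ^2 * x^2))
    (f' := fun x => s * σ^2 / Real.sqrt (σ^2 + ξ^2 * x^2) ^ 3)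
    (g := fun t => Real.exp (-(c/σ)^2 * (1 + t^2) / 2) / (1 + t^2))
    (fun x _ => by
      have h1 : HasDerivAt (fun x : ℝ => σ^2 + ξ^2 * x^2) (ξ^2 * (2 * x)) x := by
        simpa using ((hasDerivAt_pow 2 x).const_mul (ξ^2)).const_add (σ^2)
      have h2 := ((hasDerivAt_id x).const_mul s).div (h1.sqrt (hD x).ne') (hR x).ne'
      refine h2.congr_deriv ?_
      have h3 := hRR x
      have h4 := hR x
      simp only [id]
      generalize Real.sqrt (σ^2 + ξ^2 * x^2) = R at *
      field_simp
      rw [h3]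
      ring)
    (by
      apply Continuous.continuousOn
      exact Continuous.div (by fun_prop) (by fun_prop) (fun x => (pow_pos (hR x) 3).ne'))
    (Continuous.div (by fun_prop) (by fun_prop) (fun x => by positivity))
  simp only [mul_zero, zero_div, mul_one, one_pow] at hsub
  rw [← hsub]
  congr 1
  funext x
  simp only [Function.comp]
  have h3 := hRR x
  have h4 := hR x
  have ht : 1 + (s * x / Real.sqrt (σ^2 + ξ^2 * x^2))^2
      = σ^2 * ((1 + x^2) / (σ^2 + ξ^2 * x^2)) := by
    rw [div_pow, h3]
    have := (hD x).ne'
    field_simp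
    rw [← h]
    ring
  rw [ht]
  have he : -(c/σ)^2 * (σ^2 * ((1 + x^2) / (σ^2 + ξ^2 * x^2))) / 2
      = -c^2 * ((1 + x^2) / (σ^2 + ξ^2 * x^2)) / 2 := by
    field_simp
  rw [he]
  generalize Real.exp (-c^2 * ((1 + x^2) / (σ^2 + ξ^2 * x^2)) / 2) = E
  rw [← h3]
  generalize Real.sqrt (σ^2 + ξ^2 * x^2) = R at *
  rw [Real.sqrt_sq h4.le]
  field_simp

/-- The expectation of the Bernoulli variance `Φ(z)Φ(−z)` with `z = (ũ − m)/σ'`,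
`σ' = √(σ² − ξ²)`, and `m ∼ N(μ, ξ²)` equals
`2 T((ũ − μ)/σ, √((σ² − ξ²)/(σ² + ξ²)))`. -/
theorem expected_variance_owenT (utld μ ξ σ : ℝ) (hξ : 0 < ξ) (hξσ : ξ < σ) :
    (∫ m : ℝ, Phi ((utld - m) / Real.sqrt (σ^2 - ξ^2))
        * Phi ((m - utld) / Real.sqrt (σ^2 - ξ^2))
        * ((1/ξ) * phiPdf ((m - μ)/ξ)))
      = 2 * owenT ((utld - μ)/σ) (Real.sqrt ((σ^2 - ξ^2) / (σ^2 + ξ^2))) := by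
  have hσ : 0 < σ := hξ.trans hξσ
  have hpos : 0 < σ^2 - ξ^2 := by nlinarith
  have hroot : Real.sqrt ((σ^2 - ξ^2) / (σ^2 + ξ^2))
      = Real.sqrt (σ^2 - ξ^2) / Real.sqrt (σ^2 + ξ^2) := Real.sqrt_div hpos.le _
  have hs : 0 < Real.sqrt (σ^2 - ξ^2) := Real.sqrt_pos.2 hpos
  have hs2 : Real.sqrt (σ^2 - ξ^2) ^ 2 + ξ^2 = σ^2 := by
    rw [Real.sq_sqrt hpos.le]; ring
  rw [hroot]
  generalize Real.sqrt (σ^2 - ξ^2) = s at *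
  have e : ∀ m : ℝ, Phi ((utld - m) / s) * Phi ((m - utld) / s) * ((1/ξ) * phiPdf ((m - μ)/ξ))
      = (1 / Real.pi) * ∫ x in (0:ℝ)..1,
        Real.exp (-((utld - m)/s)^2 * (1 + x^2) / 2) / (1 + x^2)
          * ((1/ξ) * phiPdf ((m - μ)/ξ)) := by
    intro m
    have hn : (m - utld) / s = -((utld - m) / s) := by ring
    rw [hn, aux_PhiPhi, owenT, intervalIntegral.integral_mul_const]
    have := Real.pi_ne_zero
    field_simp
  simp only [e]
  rw [integral_const_mul, aux_swap _ _ _ _ hξ]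
  have e2 : ∀ x : ℝ, ∫ m : ℝ, Real.exp (-((utld - m)/s)^2 * (1 + x^2) / 2) / (1 + x^2)
        * ((1/ξ) * phiPdf ((m - μ)/ξ))
      = (s / Real.sqrt (σ^2 + ξ^2 * x^2)
        * Real.exp (-(utld - μ)^2 * ((1 + x^2) / (σ^2 + ξ^2 * x^2)) / 2)) / (1 + x^2) := by
    intro x
    rw [← hs2, ← aux_inner utld μ ξ s x hξ hs, ← integral_div]
    congr 1
    funext m
    ring
  simp only [e2]
  rw [aux_subst _ _ _ _ hξ hs hσ hs2, owenT]
  have := Real.pi_ne_zero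
  field_simp
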